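/- There exists a constant C > 0 with the following property. For every finite bipartite simple graph G = (U ∪ V, E) whose maximum edge degree Δ̄ satisfies Δ̄ ≥ 3, every real ε with 0 < ε ≤ 1, and every assignment of reals η_e ∈ ℝ to the edges e ∈ E, there exists a generalized (ε, β)-balanced edge orientation of G with respect to the parameters η_e, where β = C·(ln Δ̄)³/ε⁵. -/

import Mathlib

/-!
The additive terms `ε/2·deg(e)` and `β` are only slack: an orientation satisfying the stronger
inequalities with `ε = β = 0` always exists, so any `C > 0` works. Take an orientation minimizing
the potential `∑_w x_w² - 2 ∑ η_e`, where the second sum runs over the edges oriented from `U`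
to `V`. Flipping an edge `e = {u, v}` oriented from `u` to `v` changes the potential by
`2 (x_u - x_v + 1 + η_e)`, and flipping one oriented from `v` to `u` changes it by
`2 (x_v - x_u + 1 - η_e)`; by minimality both changes are nonnegative, which are the two required
inequalities. The argument is carried out in `exists_locally_balanced`, for an arbitrary graph
and arbitrary rewards `c a b` for orienting an edge from `a` to `b`.
-/

/-- The set of arcs `D` contains exactly one of the two arcs of each edge of `G`
(pairs that are not edges are unconstrained). -/
def IsOrientation {α : Type} (G : SimpleGraph α) (D : Finset (α × α)) : Prop :=
  ∀ a b : α, G.Adj a b → ((a, b) ∈ D ↔ ¬ (b, a) ∈ D)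

/-- The edges of `G` oriented towards `w` by the set of arcs `D`, recorded by their tails. -/
def inTails {α : Type} (G : SimpleGraph α) (D : Finset (α × α)) (w : α) : Set α :=
  {a : α | G.Adj a w ∧ (a, w) ∈ D}

lemma exists_isOrientation {α : Type} [Fintype α] (G : SimpleGraph α) :
    ∃ D : Finset (α × α), IsOrientation G D := by
  classical
  let f := Fintype.equivFin α
  refine ⟨Finset.univ.filter fun p => f p.1 < f p.2, fun a b hab => ?_⟩
  have hne : f a ≠ f b := fun h => hab.ne (f.injective h)
  simp only [Finset.mem_filter, Finset.mem_univ, true_and, not_lt]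
  exact ⟨le_of_lt, fun h => lt_of_le_of_ne h hne⟩

/-- A minimizer of `∑_w x_w² - 2 ∑_{(a, b) ∈ D} c a b` over all orientations `D` satisfies the
first-order condition coming from flipping a single arc. -/
lemma exists_locally_balanced {α : Type} [Fintype α] (G : SimpleGraph α) (c : α → α → ℝ) :
    ∃ D : Finset (α × α), IsOrientation G D ∧
      ∀ a b : α, G.Adj a b → (a, b) ∈ D →
        ((inTails G D b).ncard : ℝ) - ((inTails G D a).ncard : ℝ) ≤ 1 + c a b - c b a := by
  classical
  obtain ⟨D₀, hD₀⟩ := exists_isOrientation G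
  obtain ⟨D, hD, hmin⟩ := Set.exists_min_image {D | IsOrientation G D}
    (fun D => ∑ w, ((inTails G D w).ncard : ℝ) ^ 2 - 2 * ∑ p ∈ D, c p.1 p.2)
    (Set.toFinite _) ⟨D₀, hD₀⟩
  refine ⟨D, hD, fun a b hab habD => ?_⟩
  have hne : a ≠ b := hab.ne
  have hbaD : (b, a) ∉ D := (hD a b hab).1 habD
  have hba' : (b, a) ∉ D.erase (a, b) := fun h => hbaD (Finset.mem_of_mem_erase h)
  have hmem : ∀ x y, (x, y) ∈ insert (b, a) (D.erase (a, b)) ↔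
      (x = b ∧ y = a) ∨ (¬ (x = a ∧ y = b) ∧ (x, y) ∈ D) := by
    intro x y
    simp [Finset.mem_insert, Finset.mem_erase, Prod.ext_iff]
  have hD' : IsOrientation G (insert (b, a) (D.erase (a, b))) := by
    intro x y hxy
    have h := hD x y hxy
    rw [hmem, hmem]
    grind
  have hle := hmin _ hD'
  have hb : (inTails G (insert (b, a) (D.erase (a, b))) b).ncard + 1
      = (inTails G D b).ncard := by
    rw [← Set.ncard_diff_singleton_add_one (show a ∈ inTails G D b from ⟨hab, habD⟩)]
    congr 2
    ext x
    simp only [inTails, Set.mem_setOf_eq, Set.mem_diff, Set.mem_singleton_iff, hmem]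
    grind
  have ha : (inTails G (insert (b, a) (D.erase (a, b))) a).ncard
      = (inTails G D a).ncard + 1 := by
    rw [← Set.ncard_insert_of_notMem (show b ∉ inTails G D a from fun h => hbaD h.2)]
    congr 1
    ext x
    have := hab.symm
    simp only [inTails, Set.mem_setOf_eq, Set.mem_insert_iff, hmem]
    grind
  have hw : ∀ w, w ≠ a → w ≠ b →
      inTails G (insert (b, a) (D.erase (a, b))) w = inTails G D w := by
    intro w h1 h2
    ext x
    simp only [inTails, Set.mem_setOf_eq, hmem]
    grind
  have hbR : ((inTails G (insert (b, a) (D.erase (a, b))) b).ncard : ℝ)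
      = (inTails G D b).ncard - 1 := by
    rw [← hb]; push_cast; ring
  have haR : ((inTails G (insert (b, a) (D.erase (a, b))) a).ncard : ℝ)
      = (inTails G D a).ncard + 1 := by
    rw [ha]; push_cast; ring
  have hsq : ∀ w, ((inTails G (insert (b, a) (D.erase (a, b))) w).ncard : ℝ) ^ 2
      = ((inTails G D w).ncard : ℝ) ^ 2
        + (if w = b then 1 - 2 * ((inTails G D b).ncard : ℝ) else 0)
        + (if w = a then 1 + 2 * ((inTails G D a).ncard : ℝ) else 0) := by
    intro w
    by_cases h1 : w = a
    · subst h1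
      rw [haR, if_neg hne, if_pos rfl]; ring
    · by_cases h2 : w = b
      · subst h2
        rw [hbR, if_neg h1, if_pos rfl]; ring
      · rw [hw w h1 h2, if_neg h1, if_neg h2]; ring
  have hc := Finset.add_sum_erase D (fun p => c p.1 p.2) habD
  simp only [Finset.sum_congr rfl fun w _ => hsq w, Finset.sum_add_distrib, Finset.sum_ite_eq',
    Finset.mem_univ, if_true, Finset.sum_insert hba'] at hle
  simp only at hc
  linarith

/-- There is a constant `C > 0` such that for every finite bipartite simple
graph `G = (U ∪ V, E)` with maximum edge degree `Δ̄ ≥ 3`, every `0 < ε ≤ 1` and every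
assignment of reals `η_e` to the edges, there exists a generalized `(ε, β)`-balanced edge
orientation of `G` w.r.t. the `η_e`, where `β = C·(ln Δ̄)³/ε⁵`. -/
theorem stmt3 :
    ∃ C : ℝ, 0 < C ∧
      ∀ (α : Type) [Fintype α] (G : SimpleGraph α) (Uside : α → Prop),
        (∀ u v : α, G.Adj u v → (Uside u ↔ ¬ Uside v)) →
      ∀ (Δbar : ℕ),
        (∀ u v : α, G.Adj u v →
          (G.neighborSet u).ncard + (G.neighborSet v).ncard - 2 ≤ Δbar) →
        (∃ u v : α, G.Adj u v ∧
          (G.neighborSet u).ncard + (G.neighborSet v).ncard - 2 = Δbar) →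
        3 ≤ Δbar →
      ∀ (ε : ℝ), 0 < ε → ε ≤ 1 →
      ∀ (η : Sym2 α → ℝ),
      ∃ ori : α → α → Prop,
        (∀ u v : α, G.Adj u v → (ori u v ↔ ¬ ori v u)) ∧
        ∀ u v : α, G.Adj u v → Uside u → ¬ Uside v →
          (ori u v →
            ({w : α | G.Adj w v ∧ ori w v}.ncard : ℝ) - ({w : α | G.Adj w u ∧ ori w u}.ncard : ℝ)
              ≤ η s(u, v) + 1
                + ε / 2 * (((G.neighborSet u).ncard : ℝ) + ((G.neighborSet v).ncard : ℝ) - 2)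
                + C * (Real.log Δbar) ^ 3 / ε ^ 5) ∧
          (ori v u →
            ({w : α | G.Adj w u ∧ ori w u}.ncard : ℝ) - ({w : α | G.Adj w v ∧ ori w v}.ncard : ℝ)
              ≤ - η s(u, v) + 1
                + ε / 2 * (((G.neighborSet u).ncard : ℝ) + ((G.neighborSet v).ncard : ℝ) - 2)
                + C * (Real.log Δbar) ^ 3 / ε ^ 5) := by
  classical
  refine ⟨1, one_pos, ?_⟩
  intro α _ G Uside _ Δbar _ _ _ ε hε _ η
  obtain ⟨D, hD, hbal⟩ :=
    exists_locally_balanced G (fun a b => if Uside a then η s(a, b) else 0)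
  refine ⟨fun a b => (a, b) ∈ D, hD, fun u v huv hu hv => ?_⟩
  have hdu : (1 : ℝ) ≤ (G.neighborSet u).ncard := by
    exact_mod_cast (Set.ncard_pos (Set.toFinite _)).2 ⟨v, huv⟩
  have hdv : (1 : ℝ) ≤ (G.neighborSet v).ncard := by
    exact_mod_cast (Set.ncard_pos (Set.toFinite _)).2 ⟨u, huv.symm⟩
  have h1 : 0 ≤ ε / 2 * (((G.neighborSet u).ncard : ℝ) + ((G.neighborSet v).ncard : ℝ) - 2) :=
    mul_nonneg (by linarith) (by linarith)
  have h2 : 0 ≤ 1 * (Real.log Δbar) ^ 3 / ε ^ 5 := by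
    have := Real.log_natCast_nonneg Δbar
    positivity
  constructor
  · intro h
    have := hbal u v huv h
    simp only [hu, hv, if_true, if_false, inTails] at this
    linarith
  · intro h
    have := hbal v u huv.symm h
    simp only [hu, hv, if_true, if_false, inTails] at this
    linarith
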